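/- Let α, β, γ ∈ ℂ with none of α, β, γ a nonpositive integer, let δ, w ∈ ℂ, and let k ∈ (0,1). Define f_{m,n} and c_n as in the context. Then the coefficients c_n grow at most polynomially: there exist constants C > 0 and p ≥ 0 such that |c_n| ≤ C·(n+1)^p for all n ≥ 0. In particular, the power series Σ_{n=0}^{∞} c_n z^n converges for every complex z with |z| < 1. -/

import Mathlib

/-- The Pochhammer symbol `(x)_n = x(x+1)⋯(x+n-1)`. -/
noncomputable def poch (x : ℂ) (n : ℕ) : ℂ := ∏ i ∈ Finset.range n, (x + (i : ℂ))

/-- The index set of tuples `(ℓ_1, j_1, …, ℓ_m, j_m)` with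
`0 ≤ ℓ_1 ≤ j_1 < ℓ_2 ≤ j_2 < ⋯ < ℓ_m ≤ j_m < n`, encoded as pairs of functions
`(ℓ, j) : (Fin m → Fin n) × (Fin m → Fin n)`. -/
def heunIdx (m n : ℕ) : Finset ((Fin m → Fin n) × (Fin m → Fin n)) :=
  Finset.univ.filter fun p =>
    (∀ s : Fin m, (p.1 s : ℕ) ≤ (p.2 s : ℕ)) ∧
    (∀ s t : Fin m, (s : ℕ) + 1 = (t : ℕ) → (p.2 s : ℕ) < (p.1 t : ℕ))

/-- The coefficients `f_{m,n}`: `f_{0,n} = k^{2n}`; for `1 ≤ m ≤ n`,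
`f_{m,n} = (-1)^m k^{2n-2m} Σ ∏_{s=1}^m [j_s!(γ)_{j_s}(α)_{ℓ_s}(β)_{ℓ_s} /
(ℓ_s!(γ)_{ℓ_s}(α)_{j_s+1}(β)_{j_s+1})] k^{-2(j_s-ℓ_s)} (w - (1-k²)δℓ_s)`,
the sum running over `heunIdx m n`; and `f_{m,n} = 0` for `m < 0` or `m > n`. -/
noncomputable def heunf (k : ℝ) (α β γ δ w : ℂ) (m : ℤ) (n : ℕ) : ℂ :=
  if m = 0 then (k : ℂ) ^ (2 * n)
  else if m < 0 ∨ (n : ℤ) < m then 0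
  else (-1 : ℂ) ^ m.toNat * (k : ℂ) ^ (2 * (n : ℤ) - 2 * m) *
    ∑ p ∈ heunIdx m.toNat n, ∏ s : Fin m.toNat,
      ((Nat.factorial (p.2 s : ℕ) : ℂ) * poch γ (p.2 s : ℕ) * poch α (p.1 s : ℕ) *
          poch β (p.1 s : ℕ)) /
        ((Nat.factorial (p.1 s : ℕ) : ℂ) * poch γ (p.1 s : ℕ) * poch α ((p.2 s : ℕ) + 1) *
          poch β ((p.2 s : ℕ) + 1)) *
      (k : ℂ) ^ (-(2 : ℤ) * (((p.2 s : ℕ) : ℤ) - ((p.1 s : ℕ) : ℤ))) *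
      (w - (1 - (k : ℂ) ^ 2) * δ * ((p.1 s : ℕ) : ℂ))

/-- The Taylor coefficients `c_n = ((α)_n (β)_n / (n! (γ)_n)) Σ_{m=0}^n f_{m,n}`
of the local Heun solution. -/
noncomputable def heunc (k : ℝ) (α β γ δ w : ℂ) (n : ℕ) : ℂ :=
  poch α n * poch β n / ((Nat.factorial n : ℂ) * poch γ n) *
    ∑ m ∈ Finset.range (n + 1), heunf k α β γ δ w (m : ℤ) n


/-- ℕ-valued version of the index set. -/
noncomputable def natIdx (m n : ℕ) : Finset ((Fin m → ℕ) × (Fin m → ℕ)) := by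
  classical
  exact ((Fintype.piFinset fun _ => Finset.range n) ×ˢ
    (Fintype.piFinset fun _ => Finset.range n)).filter fun p =>
    (∀ s : Fin m, p.1 s ≤ p.2 s) ∧ (∀ s t : Fin m, s < t → p.2 s < p.1 t)

lemma mem_natIdx {m n : ℕ} {p : (Fin m → ℕ) × (Fin m → ℕ)} :
    p ∈ natIdx m n ↔ ((∀ s, p.1 s < n) ∧ (∀ s, p.2 s < n)) ∧
      (∀ s : Fin m, p.1 s ≤ p.2 s) ∧ (∀ s t : Fin m, s < t → p.2 s < p.1 t) := by
  classical
  simp [natIdx, Fintype.mem_piFinset]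

lemma chain_of_adj {m : ℕ} (l j : Fin m → ℕ) (h1 : ∀ s, l s ≤ j s)
    (h2 : ∀ s t : Fin m, (s : ℕ) + 1 = (t : ℕ) → j s < l t) :
    ∀ s t : Fin m, s < t → j s < l t := by
  have key : ∀ d : ℕ, ∀ s t : Fin m, (s : ℕ) + 1 + d = (t : ℕ) → j s < l t := by
    intro d
    induction d with
    | zero => intro s t h; exact h2 s t (by omega)
    | succ d ih =>
      intro s t h
      have hlt : (s : ℕ) + 1 + d < m := by have := t.2; omega
      have a := ih s ⟨(s : ℕ) + 1 + d, hlt⟩ rfl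
      have b := h1 ⟨(s : ℕ) + 1 + d, hlt⟩
      have c := h2 ⟨(s : ℕ) + 1 + d, hlt⟩ t (by simp; omega)
      omega
  intro s t hst
  have : (s : ℕ) < t := hst
  exact key ((t : ℕ) - s - 1) s t (by omega)

lemma sum_heunIdx (m n : ℕ) (F : (Fin m → ℕ) × (Fin m → ℕ) → ℂ) :
    ∑ p ∈ heunIdx m n, F (fun s => (p.1 s : ℕ), fun s => (p.2 s : ℕ)) =
      ∑ p ∈ natIdx m n, F p := by
  refine Finset.sum_bij (fun p _ => (fun s => (p.1 s : ℕ), fun s => (p.2 s : ℕ))) ?_ ?_ ?_ ?_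
  · intro p hp
    simp only [heunIdx, Finset.mem_filter, Finset.mem_univ, true_and] at hp
    rw [mem_natIdx]
    exact ⟨⟨fun s => (p.1 s).2, fun s => (p.2 s).2⟩, hp.1,
      chain_of_adj (fun s => (p.1 s : ℕ)) (fun s => (p.2 s : ℕ)) hp.1 hp.2⟩
  · intro p _ q _ h
    simp only [Prod.mk.injEq] at h
    ext s
    · exact congrFun h.1 s
    · exact congrFun h.2 s
  · intro p hp
    rw [mem_natIdx] at hp
    refine ⟨(fun s => ⟨p.1 s, hp.1.1 s⟩, fun s => ⟨p.2 s, hp.1.2 s⟩), ?_, rfl⟩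
    simp only [heunIdx, Finset.mem_filter, Finset.mem_univ, true_and]
    refine ⟨hp.2.1, fun s t h => hp.2.2 s t ?_⟩
    show (s : ℕ) < t
    omega
  · intro p _
    rfl

/-- The nested sum with general weight. -/
noncomputable def gsum (h : ℕ → ℕ → ℂ) (m n : ℕ) : ℂ :=
  ∑ p ∈ natIdx m n, ∏ s : Fin m, h (p.1 s) (p.2 s)

lemma gsum_zero (h : ℕ → ℕ → ℂ) (n : ℕ) : gsum h 0 n = 1 := by
  have : natIdx 0 n = Finset.univ := by
    ext p
    simp [mem_natIdx]
  simp [gsum, this]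

lemma gsum_succ (h : ℕ → ℕ → ℂ) (m n : ℕ) :
    gsum h (m + 1) n =
      ∑ j ∈ Finset.range n, ∑ l ∈ Finset.range (j + 1), h l j * gsum h m l := by
  simp only [gsum, Finset.mul_sum]
  simp only [Finset.sum_sigma']
  refine Finset.sum_bij'
    (i := fun p _ => ⟨p.2 (Fin.last m), p.1 (Fin.last m),
      (fun s => p.1 s.castSucc, fun s => p.2 s.castSucc)⟩)
    (j := fun q _ => (Fin.snoc (α := fun _ => ℕ) q.2.2.1 q.2.1,
      Fin.snoc (α := fun _ => ℕ) q.2.2.2 q.1)) ?_ ?_ ?_ ?_ ?_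
  · intro p hp
    rw [mem_natIdx] at hp
    obtain ⟨⟨h1, h2⟩, h3, h4⟩ := hp
    simp only [Finset.mem_sigma, Finset.mem_range, mem_natIdx]
    refine ⟨h2 _, Nat.lt_succ_of_le (h3 _), ⟨fun s => ?_, fun s => ?_⟩, fun s => h3 _,
      fun s t hst => h4 _ _ (Fin.castSucc_lt_castSucc_iff.2 hst)⟩
    · exact lt_of_le_of_lt (h3 _) (h4 _ _ (Fin.castSucc_lt_last s))
    · exact h4 _ _ (Fin.castSucc_lt_last s)
  · rintro ⟨j, l, a, b⟩ hq
    simp only [Finset.mem_sigma, Finset.mem_range, mem_natIdx] at hq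
    obtain ⟨hj, hl, ⟨h1, h2⟩, h3, h4⟩ := hq
    rw [mem_natIdx]
    refine ⟨⟨fun s => ?_, fun s => ?_⟩, fun s => ?_, fun s t hst => ?_⟩
    · refine Fin.lastCases ?_ (fun i => ?_) s
      · simp; omega
      · have := h1 i
        simp; omega
    · refine Fin.lastCases ?_ (fun i => ?_) s
      · simp; omega
      · have := h2 i
        simp; omega
    · refine Fin.lastCases ?_ (fun i => ?_) s
      · simp; omega
      · have := h3 i
        simpa using this
    · revert hst
      refine Fin.lastCases ?_ (fun i => ?_) s
      · intro hst
        exact absurd hst (not_lt.2 (Fin.le_last t))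
      · refine Fin.lastCases ?_ (fun i' => ?_) t
        · intro _
          have := h2 i
          simpa using this
        · intro hst
          have := h4 i i' (Fin.castSucc_lt_castSucc_iff.1 hst)
          simpa using this
  · intro p _
    ext s
    · refine Fin.lastCases ?_ (fun i => ?_) s <;> simp
    · refine Fin.lastCases ?_ (fun i => ?_) s <;> simp
  · rintro ⟨j, l, a, b⟩ _
    simp
  · intro p _
    rw [Fin.prod_univ_castSucc, mul_comm]

lemma gsum_eq_zero (h : ℕ → ℕ → ℂ) : ∀ m n : ℕ, n < m → gsum h m n = 0 := by
  intro m
  induction m with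
  | zero => intro n hn; omega
  | succ m ih =>
    intro n hn
    rw [gsum_succ]
    refine Finset.sum_eq_zero fun j hj => Finset.sum_eq_zero fun l hl => ?_
    simp only [Finset.mem_range] at hj hl
    rw [ih l (by omega), mul_zero]

/-- Total nested sum. -/
noncomputable def gtot (h : ℕ → ℕ → ℂ) (n : ℕ) : ℂ :=
  ∑ m ∈ Finset.range (n + 1), gsum h m n

lemma gtot_eq (h : ℕ → ℕ → ℂ) (n M : ℕ) (hM : n < M) :
    ∑ m ∈ Finset.range M, gsum h m n = gtot h n := by
  symm
  refine Finset.sum_subset ?_ ?_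
  · intro x hx
    simp only [Finset.mem_range] at hx ⊢
    omega
  · intro x _ hx
    simp only [Finset.mem_range] at hx
    exact gsum_eq_zero h x n (by omega)

lemma gtot_zero (h : ℕ → ℕ → ℂ) : gtot h 0 = 1 := by
  simp [gtot, gsum_zero]

lemma gtot_succ (h : ℕ → ℕ → ℂ) (n : ℕ) :
    gtot h (n + 1) = gtot h n + ∑ l ∈ Finset.range (n + 1), h l n * gtot h l := by
  rw [← gtot_eq h n (n + 1 + 1) (by omega), gtot, Finset.sum_range_succ', Finset.sum_range_succ'
    (fun m => gsum h m n)]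
  simp only [gsum_zero, gsum_succ, Finset.sum_range_succ _ n, Finset.sum_add_distrib]
  have : ∀ l ∈ Finset.range (n + 1), h l n * gtot h l =
      ∑ m ∈ Finset.range (n + 1), h l n * gsum h m l := by
    intro l hl
    rw [← gtot_eq h l (n + 1) (by simpa using hl), Finset.mul_sum]
  have e := Finset.sum_congr rfl this
  rw [Finset.sum_comm] at e
  simp only [Finset.sum_range_succ _ n, Finset.sum_add_distrib] at e
  rw [e]
  ring

/-- The weight. -/
noncomputable def hw (k : ℝ) (α β γ δ w : ℂ) (l j : ℕ) : ℂ :=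
  -((k : ℂ) ^ 2)⁻¹ * (((Nat.factorial j : ℂ) * poch γ j * poch α l * poch β l) /
        ((Nat.factorial l : ℂ) * poch γ l * poch α (j + 1) * poch β (j + 1)) *
      (k : ℂ) ^ (-(2 : ℤ) * ((j : ℤ) - (l : ℤ))) *
      (w - (1 - (k : ℂ) ^ 2) * δ * (l : ℂ)))

lemma heunf_eq (k : ℝ) (hk0 : 0 < k) (α β γ δ w : ℂ) (m n : ℕ) (hmn : m ≤ n) :
    heunf k α β γ δ w (m : ℤ) n = (k : ℂ) ^ (2 * n) * gsum (hw k α β γ δ w) m n := by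
  have hk : (k : ℂ) ≠ 0 := by exact_mod_cast hk0.ne'
  rcases Nat.eq_zero_or_pos m with rfl | hm
  · simp [heunf, gsum_zero]
  · have h1 : ¬ ((m : ℤ) = 0) := by omega
    have h2 : ¬ ((m : ℤ) < 0 ∨ (n : ℤ) < m) := by omega
    rw [heunf, if_neg h1, if_neg h2, Int.toNat_natCast]
    rw [sum_heunIdx m n (fun p => ∏ s : Fin m,
      ((Nat.factorial (p.2 s) : ℂ) * poch γ (p.2 s) * poch α (p.1 s) *
          poch β (p.1 s)) /
        ((Nat.factorial (p.1 s) : ℂ) * poch γ (p.1 s) * poch α ((p.2 s) + 1) *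
          poch β ((p.2 s) + 1)) *
      (k : ℂ) ^ (-(2 : ℤ) * (((p.2 s : ℕ) : ℤ) - ((p.1 s : ℕ) : ℤ))) *
      (w - (1 - (k : ℂ) ^ 2) * δ * ((p.1 s : ℕ) : ℂ)))]
    simp only [gsum, hw]
    simp only [Finset.prod_mul_distrib (f := fun _ => -((k : ℂ) ^ 2)⁻¹), Finset.prod_const,
      Finset.card_univ, Fintype.card_fin]
    rw [← Finset.mul_sum, ← mul_assoc]
    congr 1
    have e : (k : ℂ) ^ (2 * (n : ℤ) - 2 * (m : ℤ)) = (k : ℂ) ^ (2 * n) * (((k : ℂ) ^ 2)⁻¹) ^ m := by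
      rw [zpow_sub₀ hk, inv_pow, ← pow_mul, div_eq_mul_inv]
      norm_cast
    rw [e, neg_pow (((k : ℂ) ^ 2)⁻¹)]
    ring

lemma poch_succ (x : ℂ) (n : ℕ) : poch x (n + 1) = poch x n * (x + n) := by
  simp [poch, Finset.prod_range_succ]

lemma add_ne {x : ℂ} (hx : ∀ j : ℕ, x ≠ -(j : ℂ)) (n : ℕ) : x + n ≠ 0 := by
  intro h
  exact hx n (eq_neg_of_add_eq_zero_left h)

lemma poch_ne {x : ℂ} (hx : ∀ j : ℕ, x ≠ -(j : ℂ)) (n : ℕ) : poch x n ≠ 0 :=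
  Finset.prod_ne_zero_iff.2 fun i _ => add_ne hx i

lemma heunc_eq (k : ℝ) (hk0 : 0 < k) (α β γ δ w : ℂ) (n : ℕ) :
    heunc k α β γ δ w n = poch α n * poch β n / ((Nat.factorial n : ℂ) * poch γ n) *
      ((k : ℂ) ^ (2 * n) * gtot (hw k α β γ δ w) n) := by
  rw [heunc, gtot, Finset.mul_sum (a := (k : ℂ) ^ (2 * n))]
  congr 1
  refine Finset.sum_congr rfl fun m hm => heunf_eq k hk0 α β γ δ w m n ?_
  simp only [Finset.mem_range] at hm
  omega

lemma heunc_rec (k : ℝ) (hk0 : 0 < k) (α β γ δ w : ℂ)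
    (hα : ∀ j : ℕ, α ≠ -(j : ℂ)) (hβ : ∀ j : ℕ, β ≠ -(j : ℂ))
    (hγ : ∀ j : ℕ, γ ≠ -(j : ℂ)) (n : ℕ) :
    ((n : ℂ) + 1) * (γ + n) * heunc k α β γ δ w (n + 1) =
      (k : ℂ) ^ 2 * (α + n) * (β + n) * heunc k α β γ δ w n -
      ∑ l ∈ Finset.range (n + 1),
        (w - (1 - (k : ℂ) ^ 2) * δ * (l : ℂ)) * heunc k α β γ δ w l := by
  have hk : (k : ℂ) ≠ 0 := by exact_mod_cast hk0.ne'
  have hn1 : (n : ℂ) + 1 ≠ 0 := by exact_mod_cast Nat.succ_ne_zero n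
  have hfac : ∀ n : ℕ, (Nat.factorial n : ℂ) ≠ 0 := fun n => by
    exact_mod_cast Nat.factorial_ne_zero n
  rw [heunc_eq k hk0 _ _ _ _ _ (n + 1), gtot_succ, sub_eq_add_neg]
  have dist : ∀ X Y Z a b : ℂ, X * (Y * (Z * (a + b))) = X * (Y * (Z * a)) + X * (Y * (Z * b)) := by
    intros; ring
  rw [dist]
  congr 1
  · rw [heunc_eq k hk0, poch_succ, poch_succ, poch_succ, Nat.factorial_succ]
    have := hfac n
    have := poch_ne hγ n
    have := add_ne hγ n
    push_cast
    field_simp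
    try ring
  · rw [Finset.mul_sum, Finset.mul_sum, Finset.mul_sum, ← Finset.sum_neg_distrib]
    refine Finset.sum_congr rfl fun l _ => ?_
    rw [heunc_eq k hk0 _ _ _ _ _ l, hw]
    have e : (k : ℂ) ^ (-(2 : ℤ) * ((n : ℤ) - (l : ℤ))) = (k : ℂ) ^ (2 * l) / (k : ℂ) ^ (2 * n) := by
      rw [show -(2 : ℤ) * ((n : ℤ) - (l : ℤ)) = ((2 * l : ℕ) : ℤ) - ((2 * n : ℕ) : ℤ) by
        push_cast; ring, zpow_sub₀ hk, zpow_natCast, zpow_natCast]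
    rw [e, poch_succ γ, Nat.factorial_succ]
    have := hfac n
    have := hfac l
    have := poch_ne hγ n
    have := poch_ne hγ l
    have := poch_ne hα (n + 1)
    have := poch_ne hβ (n + 1)
    have := add_ne hγ n
    generalize w - (1 - (k : ℂ) ^ 2) * δ * (l : ℂ) = W
    rw [show 2 * (n + 1) = 2 * n + 2 by ring, pow_add]
    push_cast
    field_simp
    try ring

lemma pow_step (q : ℕ) (x : ℝ) (hx : 0 ≤ x) :
    x ^ (q + 1) + (q + 1) * x ^ q ≤ (x + 1) ^ (q + 1) := by
  induction q with
  | zero => simp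
  | succ q ih =>
    have h1 := mul_le_mul_of_nonneg_right ih (by linarith : 0 ≤ x + 1)
    have h2 : 0 ≤ (q + 1 : ℝ) * x ^ q := by positivity
    push_cast
    rw [pow_succ (x + 1)]
    refine le_trans ?_ h1
    rw [pow_succ x (q + 1), pow_succ x q]
    nlinarith

lemma sum_pow_le (q n : ℕ) :
    ((q : ℝ) + 1) * ∑ l ∈ Finset.range (n + 1), ((l : ℝ) + 1) ^ q ≤ ((n : ℝ) + 2) ^ (q + 1) := by
  induction n with
  | zero =>
    have := pow_step q 1 zero_le_one
    simp only [one_pow] at this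
    norm_num at this ⊢
    linarith
  | succ n ih =>
    rw [Finset.sum_range_succ, mul_add]
    have := pow_step q ((n : ℝ) + 2) (by positivity)
    push_cast
    rw [show (n : ℝ) + 1 + 1 = n + 2 by ring, show (n : ℝ) + 1 + 2 = n + 2 + 1 by ring]
    linarith

lemma eventually_bounds (k : ℝ) (hk0 : 0 < k) (hk1 : k < 1) (α β γ : ℂ) :
    ∃ N : ℕ, ∀ n : ℕ, N ≤ n →
      ‖(k : ℂ) ^ 2 * (α + n) * (β + n)‖ ≤ (1 + k ^ 2) / 2 * (((n : ℝ) + 1) * ‖γ + n‖) ∧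
      ((n : ℝ) + 2) ^ 2 ≤ 4 * (((n : ℝ) + 1) * ‖γ + n‖) := by
  set a := ‖α‖
  set b := ‖β‖
  set g := ‖γ‖
  have ha : 0 ≤ a := norm_nonneg _
  have hb : 0 ≤ b := norm_nonneg _
  have hg : 0 ≤ g := norm_nonneg _
  have hk2 : k ^ 2 < 1 := by nlinarith
  set e := (1 - k ^ 2) / 2 with he
  have hepos : 0 < e := by rw [he]; linarith
  set M := a + b + a * b + g with hM
  have hM0 : 0 ≤ M := by positivity
  obtain ⟨N, hN⟩ := exists_nat_ge (2 * M / e + 4 * g + 4)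
  refine ⟨N, fun n hn => ?_⟩
  have hnN : (N : ℝ) ≤ n := by exact_mod_cast hn
  have hdiv : 0 ≤ 2 * M / e := by positivity
  have hn1 : 4 * g + 4 ≤ (n : ℝ) := by linarith
  have hn2 : 2 * M ≤ e * n := by
    have : 2 * M / e ≤ n := by linarith
    rw [div_le_iff₀ hepos] at this
    linarith
  set x : ℝ := (n : ℝ)
  have hA : ‖α + n‖ ≤ a + x := by
    simpa [x] using norm_add_le α (n : ℂ)
  have hB : ‖β + n‖ ≤ b + x := by
    simpa [x] using norm_add_le β (n : ℂ)
  have hG : x - g ≤ ‖γ + n‖ := by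
    have := norm_sub_norm_le (n : ℂ) (-γ)
    simp only [norm_neg, sub_neg_eq_add, Complex.norm_natCast] at this
    rw [add_comm]
    exact this
  have hGl : (x + 1) * (x - g) ≤ (x + 1) * ‖γ + n‖ :=
    mul_le_mul_of_nonneg_left hG (by linarith)
  constructor
  · rw [norm_mul, norm_mul]
    have hkn : ‖(k : ℂ) ^ 2‖ = k ^ 2 := by
      rw [norm_pow, Complex.norm_real, Real.norm_eq_abs, sq_abs]
    rw [hkn]
    have h1 : k ^ 2 * ‖α + n‖ * ‖β + n‖ ≤ k ^ 2 * (a + x) * (b + x) := by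
      gcongr
    have h2 : k ^ 2 * (a + x) * (b + x) ≤ (1 + k ^ 2) / 2 * ((x + 1) * (x - g)) := by
      have hx1 : 1 ≤ x := by linarith
      have hr : (1 + k ^ 2) / 2 = k ^ 2 + e := by rw [he]; ring
      have p1 : k ^ 2 * ((a + x) * (b + x)) ≤ k ^ 2 * x ^ 2 + ((a + b) * x + a * b) := by
        have : 0 ≤ (1 - k ^ 2) * ((a + b) * x + a * b) :=
          mul_nonneg (by linarith) (by positivity)
        nlinarith
      have p2 : (k ^ 2 + e) * x ^ 2 - g * (x + 1) ≤ (k ^ 2 + e) * ((x + 1) * (x - g)) := by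
        have hle : k ^ 2 + e ≤ 1 := by rw [he]; linarith
        have h0 : 0 ≤ k ^ 2 + e := by positivity
        have : 0 ≤ (1 - (k ^ 2 + e)) * (g * (x + 1)) :=
          mul_nonneg (by linarith) (by positivity)
        have : 0 ≤ (k ^ 2 + e) * x := by positivity
        nlinarith
      have p3 : 2 * M * x ≤ e * x * x := mul_le_mul_of_nonneg_right hn2 (by linarith)
      have p4 : (a + b) * x + a * b + g * (x + 1) ≤ 2 * M * x := by
        rw [hM]
        have : 0 ≤ a * b := by positivity
        nlinarith [mul_nonneg this (by linarith : 0 ≤ x - 1),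
          mul_nonneg hg (by linarith : 0 ≤ x - 1), mul_nonneg ha (by linarith : 0 ≤ x),
          mul_nonneg hb (by linarith : 0 ≤ x)]
      rw [hr]
      nlinarith
    have h3 := mul_le_mul_of_nonneg_left hGl (by positivity : 0 ≤ (1 + k ^ 2) / 2)
    linarith
  · nlinarith

lemma growth (k : ℝ) (hk0 : 0 < k) (hk1 : k < 1) (α β γ δ w : ℂ) (c : ℕ → ℂ)
    (hc : ∀ n : ℕ, ((n : ℂ) + 1) * (γ + n) * c (n + 1) =
      (k : ℂ) ^ 2 * (α + n) * (β + n) * c n -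
      ∑ l ∈ Finset.range (n + 1), (w - (1 - (k : ℂ) ^ 2) * δ * (l : ℂ)) * c l) :
    ∃ C : ℝ, 0 < C ∧ ∃ p : ℕ, ∀ n : ℕ, ‖c n‖ ≤ C * ((n : ℝ) + 1) ^ p := by
  obtain ⟨N, hN⟩ := eventually_bounds k hk0 hk1 α β γ
  set r := (1 + k ^ 2) / 2 with hr
  have hk2 : k ^ 2 < 1 := by nlinarith
  have hr1 : 0 < 1 - r := by rw [hr]; linarith
  have hr0 : 0 ≤ r := by positivity
  set B := ‖w‖ + ‖(1 - (k : ℂ) ^ 2) * δ‖ with hB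
  have hB0 : 0 ≤ B := by positivity
  have hW : ∀ l : ℕ, ‖w - (1 - (k : ℂ) ^ 2) * δ * (l : ℂ)‖ ≤ B * ((l : ℝ) + 1) := by
    intro l
    refine (norm_sub_le _ _).trans ?_
    rw [norm_mul _ (l : ℂ), Complex.norm_natCast, hB]
    have h1 : 0 ≤ ‖w‖ * l := by positivity
    have h2 := norm_nonneg ((1 - (k : ℂ) ^ 2) * δ)
    nlinarith
  obtain ⟨p, hp⟩ := exists_nat_ge (4 * B / (1 - r))
  have hp' : 4 * B ≤ (1 - r) * (p + 2) := by
    rw [div_le_iff₀ hr1] at hp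
    linarith
  set C := 1 + ∑ l ∈ Finset.range (N + 1), ‖c l‖ with hC
  have hCpos : 0 < C := by positivity
  refine ⟨C, hCpos, p, fun n => ?_⟩
  induction n using Nat.strong_induction_on with
  | _ n ih =>
  by_cases hnN : n ≤ N
  · have h1 : ‖c n‖ ≤ ∑ l ∈ Finset.range (N + 1), ‖c l‖ :=
      Finset.single_le_sum (f := fun l => ‖c l‖) (fun l _ => norm_nonneg _)
        (Finset.mem_range.2 (by omega))
    have h2 : (1 : ℝ) ≤ ((n : ℝ) + 1) ^ p := one_le_pow₀ (by linarith [n.cast_nonneg (α := ℝ)])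
    nlinarith
  · obtain ⟨n, rfl⟩ : ∃ n', n = n' + 1 := ⟨n - 1, by omega⟩
    obtain ⟨b1, b2⟩ := hN n (by omega)
    set Q := ((n : ℝ) + 1) * ‖γ + n‖ with hQ
    have hx0 : (0 : ℝ) ≤ n := n.cast_nonneg
    have hQpos : 0 < Q := by nlinarith
    have hQn : ‖((n : ℂ) + 1) * (γ + n)‖ = Q := by
      rw [norm_mul, hQ]
      congr 1
      have : ((n : ℂ) + 1) = ((n + 1 : ℕ) : ℂ) := by push_cast; ring
      rw [this, Complex.norm_natCast]
      push_cast
      ring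
    have h1 : Q * ‖c (n + 1)‖ ≤ r * Q * (C * ((n : ℝ) + 1) ^ p) +
        ∑ l ∈ Finset.range (n + 1), B * C * ((l : ℝ) + 1) ^ (p + 1) := by
      rw [← hQn, ← norm_mul, hc n, hQn]
      refine (norm_sub_le _ _).trans (add_le_add ?_ ?_)
      · rw [norm_mul]
        exact mul_le_mul b1 (ih n (by omega)) (norm_nonneg _) (by positivity)
      · refine (norm_sum_le _ _).trans (Finset.sum_le_sum fun l hl => ?_)
        rw [norm_mul]
        have hl' : l < n + 1 := by simpa using hl
        calc _ ≤ (B * ((l : ℝ) + 1)) * (C * ((l : ℝ) + 1) ^ p) :=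
              mul_le_mul (hW l) (ih l hl') (norm_nonneg _) (by positivity)
          _ = _ := by ring
    rw [← Finset.mul_sum] at h1
    have h2 := sum_pow_le (p + 1) n
    set S := ∑ l ∈ Finset.range (n + 1), ((l : ℝ) + 1) ^ (p + 1) with hS
    set y := ((n : ℝ) + 2) ^ p with hy
    have hy0 : 0 < y := by positivity
    have h3 : ((n : ℝ) + 1) ^ p ≤ y := by
      rw [hy]; gcongr; norm_num
    have h4 : ((p : ℝ) + 2) * S ≤ y * (4 * Q) := by
      have : ((n : ℝ) + 2) ^ (p + 1 + 1) = y * ((n : ℝ) + 2) ^ 2 := by rw [hy]; ring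
      rw [this] at h2
      push_cast at h2
      have := mul_le_mul_of_nonneg_left b2 hy0.le
      linarith
    have h5 : B * S ≤ (1 - r) * (y * Q) := by
      have hS0 : 0 ≤ S := by positivity
      have e1 := mul_le_mul_of_nonneg_right hp' hS0
      have e2 := mul_le_mul_of_nonneg_left h4 hr1.le
      linarith
    have h6 : Q * ‖c (n + 1)‖ ≤ Q * (C * y) := by
      have e1 := mul_le_mul_of_nonneg_left h5 hCpos.le
      have e2 := mul_le_mul_of_nonneg_left h3 (by positivity : 0 ≤ r * Q * C)
      linarith
    have h7 := le_of_mul_le_mul_left h6 hQpos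
    push_cast
    rw [show (n : ℝ) + 1 + 1 = n + 2 by ring]
    exact h7

/-- The coefficients `c_n` grow at most polynomially, and consequently the power
series `Σ c_n zⁿ` converges in the open unit disk. -/
theorem heun_coefficients_polynomial_growth (k : ℝ) (hk0 : 0 < k) (hk1 : k < 1)
    (α β γ δ w : ℂ)
    (hα : ∀ j : ℕ, α ≠ -(j : ℂ)) (hβ : ∀ j : ℕ, β ≠ -(j : ℂ))
    (hγ : ∀ j : ℕ, γ ≠ -(j : ℂ)) :
    (∃ C : ℝ, 0 < C ∧ ∃ p : ℝ, 0 ≤ p ∧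
      ∀ n : ℕ, ‖heunc k α β γ δ w n‖ ≤ C * ((n : ℝ) + 1) ^ p) ∧
    ∀ z : ℂ, ‖z‖ < 1 → Summable fun n : ℕ => heunc k α β γ δ w n * z ^ n := by
  obtain ⟨C, hC, p, hp⟩ := growth k hk0 hk1 α β γ δ w (heunc k α β γ δ w)
    (heunc_rec k hk0 α β γ δ w hα hβ hγ)
  refine ⟨⟨C, hC, p, p.cast_nonneg, fun n => ?_⟩, fun z hz => ?_⟩
  · rw [Real.rpow_natCast]
    exact hp n
  · have hz' : ‖‖z‖‖ < 1 := by simpa using hz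
    have s1 := summable_pow_mul_geometric_of_norm_lt_one p hz'
    have s2 := summable_geometric_of_lt_one (norm_nonneg z) hz
    refine Summable.of_norm_bounded ((s1.add s2).mul_left (C * 2 ^ (p - 1))) fun n => ?_
    rw [norm_mul, norm_pow]
    have h1 := add_pow_le (n.cast_nonneg (α := ℝ)) zero_le_one p
    rw [one_pow] at h1
    calc _ ≤ C * ((n : ℝ) + 1) ^ p * ‖z‖ ^ n := by
          gcongr
          exact hp n
      _ ≤ C * (2 ^ (p - 1) * ((n : ℝ) ^ p + 1)) * ‖z‖ ^ n := by gcongr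
      _ = _ := by ring
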